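/- The rewrite relation ↝_h on λ_NRC terms is strongly normalising: every ↝_h-reduction sequence starting from any term is finite. -/

import Mathlib

/-!
The proof is a polynomial interpretation in the positive integers. Conditionals are read
additively, `⟦if L then M else N⟧ = ⟦L⟧ + ⟦M⟧ + ⟦N⟧ + 1`, while the term formers that have
hoisting frames are read multiplicatively: each is twice the product of its immediate subterms.
So plugging a term into a frame `F` multiplies its weight by some `k ≥ 2` depending only on `F`
(`exists_weight_plug`), and hoisting lowers the weight because
`k * (L + M + N + 1) > L + k * M + k * N + 1`. All the operations are strictly monotone on positive
integers, so the decrease survives in every context (`weight_lt_of_stepH`), and well-foundedness of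
`<` on `ℕ` gives termination.
-/

namespace NRC

inductive BTy | int | bool | string
deriving DecidableEq

inductive BVal
| int : Int → BVal
| bool : Bool → BVal
| str : String → BVal
deriving DecidableEq

inductive Ty
| base : BTy → Ty
| record : List (String × Ty) → Ty
| bag : Ty → Ty
| fn : Ty → Ty → Ty

inductive Tm
| var : Nat → Tm
| cst : String → List Tm → Tm
| boolLit : Bool → Tm
| table : String → Tm
| ite : Tm → Tm → Tm → Tm
| lam : Ty → Tm → Tm
| app : Tm → Tm → Tm
| rcd : List (String × Tm) → Tm
| proj : Tm → String → Tm
| isEmpty : Tm → Tm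
| emp : Tm
| sng : Tm → Tm
| union : Tm → Tm → Tm
| for_ : Tm → Tm → Tm

namespace Tm

def upRen (f : Nat → Nat) : Nat → Nat
| 0 => 0
| n+1 => f n + 1

def rename (f : Nat → Nat) : Tm → Tm
| .var n => .var (f n)
| .cst c ms => .cst c (ms.attach.map fun m => rename f m.1)
| .boolLit b => .boolLit b
| .table t => .table t
| .ite a b c => .ite (rename f a) (rename f b) (rename f c)
| .lam A m => .lam A (rename (upRen f) m)
| .app a b => .app (rename f a) (rename f b)
| .rcd fs => .rcd (fs.attach.map fun p => (p.1.1, rename f p.1.2))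
| .proj m ℓ => .proj (rename f m) ℓ
| .isEmpty m => .isEmpty (rename f m)
| .emp => .emp
| .sng m => .sng (rename f m)
| .union a b => .union (rename f a) (rename f b)
| .for_ a b => .for_ (rename f a) (rename (upRen f) b)
decreasing_by
  all_goals simp_wf
  all_goals first
    | (have := List.sizeOf_lt_of_mem m.2; omega)
    | (obtain ⟨⟨l,t⟩, hm⟩ := p; have := List.sizeOf_lt_of_mem hm; simp at this ⊢; omega)
    | omega

/-- shift all free variables up by one -/
def shift (M : Tm) : Tm := rename Nat.succ M

def upSub (σ : Nat → Tm) : Nat → Tm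
| 0 => .var 0
| n+1 => shift (σ n)

/-- simultaneous (capture-avoiding, de Bruijn) substitution -/
def subst (σ : Nat → Tm) : Tm → Tm
| .var n => σ n
| .cst c ms => .cst c (ms.attach.map fun m => subst σ m.1)
| .boolLit b => .boolLit b
| .table t => .table t
| .ite a b c => .ite (subst σ a) (subst σ b) (subst σ c)
| .lam A m => .lam A (subst (upSub σ) m)
| .app a b => .app (subst σ a) (subst σ b)
| .rcd fs => .rcd (fs.attach.map fun p => (p.1.1, subst σ p.1.2))
| .proj m ℓ => .proj (subst σ m) ℓ
| .isEmpty m => .isEmpty (subst σ m)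
| .emp => .emp
| .sng m => .sng (subst σ m)
| .union a b => .union (subst σ a) (subst σ b)
| .for_ a b => .for_ (subst σ a) (subst (upSub σ) b)
decreasing_by
  all_goals simp_wf
  all_goals first
    | (have := List.sizeOf_lt_of_mem m.2; omega)
    | (obtain ⟨⟨l,t⟩, hm⟩ := p; have := List.sizeOf_lt_of_mem hm; simp at this ⊢; omega)
    | omega

/-- substitution of a single term for variable 0: `M[x := N]` -/
def subst0 (M N : Tm) : Tm :=
  subst (fun n => match n with | 0 => N | n+1 => .var n) M

end Tm

/-- If-hoisting frames
    F[] ::= c(M̄,[],N̄) | ⟨ℓ̄'=M̄, ℓ=[], ℓ̄''=N̄⟩ | [] ⊎ N | M ⊎ [] | [[]] -/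
inductive FrameH
| cstF : String → List Tm → List Tm → FrameH
| rcdF : List (String × Tm) → String → List (String × Tm) → FrameH
| unionL : Tm → FrameH
| unionR : Tm → FrameH
| sngF : FrameH

def FrameH.plug : FrameH → Tm → Tm
| .cstF c ms ns, M => .cst c (ms ++ M :: ns)
| .rcdF fs ℓ gs, M => .rcd (fs ++ (ℓ, M) :: gs)
| .unionL N, M => .union M N
| .unionR N, M => .union N M
| .sngF, M => .sng M

/-- The rewrite relation ↝_h: hoisting conditionals out of if-hoisting frames,
    closed under arbitrary contexts. -/
inductive StepH : Tm → Tm → Prop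
| hoist (F : FrameH) {L M N} :
    StepH (F.plug (.ite L M N)) (.ite L (F.plug M) (F.plug N))
-- congruence: closure under all contexts
| congCst {c ms₁ ms₂ m m'} : StepH m m' → StepH (.cst c (ms₁ ++ m :: ms₂)) (.cst c (ms₁ ++ m' :: ms₂))
| congIte₁ {a a' b c} : StepH a a' → StepH (.ite a b c) (.ite a' b c)
| congIte₂ {a b b' c} : StepH b b' → StepH (.ite a b c) (.ite a b' c)
| congIte₃ {a b c c'} : StepH c c' → StepH (.ite a b c) (.ite a b c')
| congLam {A m m'} : StepH m m' → StepH (.lam A m) (.lam A m')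
| congApp₁ {a a' b} : StepH a a' → StepH (.app a b) (.app a' b)
| congApp₂ {a b b'} : StepH b b' → StepH (.app a b) (.app a b')
| congRcd {fs₁ fs₂ : List (String × Tm)} {ℓ m m'} :
    StepH m m' → StepH (.rcd (fs₁ ++ (ℓ, m) :: fs₂)) (.rcd (fs₁ ++ (ℓ, m') :: fs₂))
| congProj {m m' ℓ} : StepH m m' → StepH (.proj m ℓ) (.proj m' ℓ)
| congIsEmpty {m m'} : StepH m m' → StepH (.isEmpty m) (.isEmpty m')
| congSng {m m'} : StepH m m' → StepH (.sng m) (.sng m')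
| congUnion₁ {a a' b} : StepH a a' → StepH (.union a b) (.union a' b)
| congUnion₂ {a b b'} : StepH b b' → StepH (.union a b) (.union a b')
| congFor₁ {a a' b} : StepH a a' → StepH (.for_ a b) (.for_ a' b)
| congFor₂ {a b b'} : StepH b b' → StepH (.for_ a b) (.for_ a b')

/-- A term is h-strongly-normalising if all ↝_h-reduction sequences from it
    are finite. -/
def HSN (M : Tm) : Prop := Acc (fun a b => StepH b a) M

end NRC

namespace NRC

/-- The polynomial interpretation: twice the product of the subterms for formers that have
if-hoisting, and one plus the sum of the subterms for all others. The factor `2` makes the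
interpretation decrease for frames without other subterms, such as `[[]]` or a unary constant. -/
def weight : Tm → ℕ
  | .var _ => 1
  | .cst _ ms => 2 * (ms.attach.map fun m => weight m.1).prod
  | .boolLit _ => 1
  | .table _ => 1
  | .ite a b c => weight a + weight b + weight c + 1
  | .lam _ m => weight m + 1
  | .app a b => weight a + weight b + 1
  | .rcd fs => 2 * (fs.attach.map fun p => weight p.1.2).prod
  | .proj m _ => weight m + 1
  | .isEmpty m => weight m + 1
  | .emp => 1
  | .sng m => 2 * weight m
  | .union a b => 2 * (weight a * weight b)
  | .for_ a b => weight a + weight b + 1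
decreasing_by
  all_goals simp_wf
  all_goals first
    | (have := List.sizeOf_lt_of_mem m.2; omega)
    | (obtain ⟨⟨l, t⟩, hm⟩ := p; have := List.sizeOf_lt_of_mem hm; simp at this ⊢; omega)
    | omega

theorem weight_cst (c : String) (ms : List Tm) :
    weight (.cst c ms) = 2 * (ms.map weight).prod := by
  rw [weight, List.attach_map_val (f := weight)]

theorem weight_rcd (fs : List (String × Tm)) :
    weight (.rcd fs) = 2 * (fs.map fun p => weight p.2).prod := by
  rw [weight, List.attach_map_val (f := fun p : String × Tm => weight p.2)]

theorem weight_pos (M : Tm) : 0 < weight M := by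
  induction M using weight.induct with
  | case2 c ms ih =>
    rw [weight_cst]
    exact Nat.mul_pos two_pos (List.prod_pos (List.forall_mem_map.2 fun m hm => ih ⟨m, hm⟩))
  | case8 fs ih =>
    rw [weight_rcd]
    exact Nat.mul_pos two_pos (List.prod_pos (List.forall_mem_map.2 fun p hp => ih ⟨p, hp⟩))
  | _ => simp_all [weight]

theorem prod_weight_pos (ms : List Tm) : 0 < (ms.map weight).prod :=
  List.prod_pos (by simpa using fun m _ => weight_pos m)

theorem prod_weight_snd_pos (fs : List (String × Tm)) :
    0 < (fs.map fun p => weight p.2).prod :=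
  List.prod_pos (List.forall_mem_map.2 fun p _ => weight_pos p.2)

/-- Plugging into a hoisting frame acts on weights as multiplication by a constant `k ≥ 2`. -/
theorem exists_weight_plug (F : FrameH) :
    ∃ k, 2 ≤ k ∧ ∀ M, weight (F.plug M) = k * weight M := by
  cases F with
  | cstF c ms ns =>
    refine ⟨2 * ((ms.map weight).prod * (ns.map weight).prod), ?_, fun M => ?_⟩
    · have := Nat.mul_pos (prod_weight_pos ms) (prod_weight_pos ns)
      omega
    · simp only [FrameH.plug, weight_cst, List.map_append, List.map_cons, List.prod_append,
        List.prod_cons]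
      ring
  | rcdF fs l gs =>
    refine ⟨2 * ((fs.map fun p => weight p.2).prod * (gs.map fun p => weight p.2).prod), ?_,
      fun M => ?_⟩
    · have := Nat.mul_pos (prod_weight_snd_pos fs) (prod_weight_snd_pos gs)
      omega
    · simp only [FrameH.plug, weight_rcd, List.map_append, List.map_cons, List.prod_append,
        List.prod_cons]
      ring
  | unionL N =>
    refine ⟨2 * weight N, by have := weight_pos N; omega, fun M => ?_⟩
    simp only [FrameH.plug, weight]
    ring
  | unionR N =>
    refine ⟨2 * weight N, by have := weight_pos N; omega, fun M => ?_⟩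
    simp only [FrameH.plug, weight]
    ring
  | sngF => exact ⟨2, le_rfl, fun M => by simp only [FrameH.plug, weight]⟩

theorem weight_plug_lt (F : FrameH) {M N : Tm} (h : weight M < weight N) :
    weight (F.plug M) < weight (F.plug N) := by
  obtain ⟨k, hk, hF⟩ := exists_weight_plug F
  rw [hF, hF]
  exact Nat.mul_lt_mul_of_pos_left h (by omega)

theorem weight_lt_of_stepH {M N : Tm} (h : StepH M N) : weight N < weight M := by
  induction h with
  | @hoist F L M N =>
    obtain ⟨k, hk, hF⟩ := exists_weight_plug F
    simp only [hF, weight]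
    have hL : weight L ≤ k * weight L := Nat.le_mul_of_pos_left _ (by omega)
    simp only [mul_add, mul_one]
    omega
  | @congCst c ms₁ ms₂ _ _ _ ih => exact weight_plug_lt (.cstF c ms₁ ms₂) ih
  | @congRcd fs₁ fs₂ l _ _ _ ih => exact weight_plug_lt (.rcdF fs₁ l fs₂) ih
  | congSng _ ih => exact weight_plug_lt .sngF ih
  | @congUnion₁ _ _ b _ ih => exact weight_plug_lt (.unionL b) ih
  | @congUnion₂ a _ _ _ ih => exact weight_plug_lt (.unionR a) ih
  | _ => simp only [weight]; omega

end NRC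

/-- The rewrite relation ↝_h is strongly normalising: every ↝_h-reduction
    sequence starting from any term is finite. -/
theorem stepH_strongly_normalising (M : NRC.Tm) : NRC.HSN M := by
  exact Subrelation.accessible (fun h => NRC.weight_lt_of_stepH h)
    ((measure NRC.weight).wf.apply M)
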